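/- Assume α = 1 and E[X] = ∞. Set b^N_n = ∫₁^{h⁻¹(n)} h(c_N)/h(c_N x) dx. Then for i ∈ {1, N}, lim_{N→∞} limsup_{n→∞} d( L( (log₂ N / c_N) · X_i(n) / (n b^N_n) ), δ_1 ) = 0, where d is the Lévy–Prokhorov distance on probability measures on ℝ, L(·) denotes the law of a random variable, and δ_1 is the Dirac mass at 1. -/

import Mathlib

open MeasureTheory ProbabilityTheory Real Filter Set

noncomputable section


/-- One step of the `N`-BRW: each of the `N` particles branches into two, the children jump
according to `jump`, and only the `N` right-most particles are kept; the result is the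
sorted (ascending) vector of the `N` retained positions. -/
def brwStep (N : ℕ) (pos : Fin N → ℝ) (jump : Fin N → Fin 2 → ℝ) : Fin N → ℝ := fun i =>
  (((Finset.univ : Finset (Fin N × Fin 2)).val.map fun p => pos p.1 + jump p.1 p.2).sort
      (· ≤ ·)).getD (N + i) 0

/-- The `N`-BRW started from the sorted configuration `x0`, driven by the jumps `jump`:
`brw N x0 jump n i` is the position `X_{i+1}(n)` of the `(i+1)`-th lowest particle at time `n`. -/
def brw (N : ℕ) (x0 : Fin N → ℝ) (jump : ℕ → Fin N → Fin 2 → ℝ) : ℕ → Fin N → ℝ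
  | 0 => x0
  | n + 1 => brwStep N (brw N x0 jump n) (jump n)

/-- Position `X_N(n)` of the right-most particle of the `N`-BRW started at the origin. -/
def brwMax (N : ℕ) (jump : ℕ → Fin N → Fin 2 → ℝ) (n : ℕ) : ℝ :=
  ⨆ i, brw N (fun _ => 0) jump n i

/-- Position `X_1(n)` of the left-most particle of the `N`-BRW started at the origin. -/
def brwMin (N : ℕ) (jump : ℕ → Fin N → Fin 2 → ℝ) (n : ℕ) : ℝ :=
  ⨅ i, brw N (fun _ => 0) jump n i

/-- The tail `P(X > x) = 1/h(x)` of the random variable `X` under `P`. -/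
def tail {Ω : Type*} [MeasurableSpace Ω] (P : Measure Ω) (X : Ω → ℝ) (x : ℝ) : ℝ :=
  (P {ω | x < X ω}).toReal

/-- Generalized inverse `h⁻¹(y)` of `h(x) = 1 / P(X > x)`. -/
def hinv {Ω : Type*} [MeasurableSpace Ω] (P : Measure Ω) (X : Ω → ℝ) (y : ℝ) : ℝ :=
  sInf {x : ℝ | 0 ≤ x ∧ tail P X x ≤ y⁻¹}

/-- The scaling sequence `c_N = h⁻¹(2 N log₂ N)`. -/
def cN {Ω : Type*} [MeasurableSpace Ω] (P : Measure Ω) (X : Ω → ℝ) (N : ℕ) : ℝ :=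
  hinv P X (2 * N * Real.logb 2 N)

/-- `b^N_n = ∫₁^{h⁻¹(n)} h(c_N)/h(c_N x) dx` (here `h(c_N)/h(c_N x) = P(X > c_N x)/P(X > c_N)`). -/
def bN {Ω : Type*} [MeasurableSpace Ω] (P : Measure Ω) (X : Ω → ℝ) (N : ℕ) (n : ℕ) : ℝ :=
  ∫ x in (1 : ℝ)..(hinv P X n), tail P X (cN P X N * x) / tail P X (cN P X N)

lemma sorted_key (a : ℝ) : ∀ (l : List ℝ), l.Pairwise (· ≤ ·) → ∀ k, k < l.length →
    (a ≤ l.getD k 0 ↔ l.countP (fun x => decide (x < a)) ≤ k) := by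
  intro l
  induction l with
  | nil => intro _ k hk; simp at hk
  | cons x xs ih =>
    intro hs k hk
    rw [List.pairwise_cons] at hs
    obtain ⟨h1, h2⟩ := hs
    by_cases hx : x < a
    · cases k with
      | zero => simp [hx]
      | succ k =>
        have := ih h2 k (by simpa using hk)
        simp only [List.getD_cons_succ, this, List.countP_cons, hx, decide_true, if_true]
        omega
    · have hx' := not_lt.1 hx
      have h0 : List.countP (fun x => decide (x < a)) (x :: xs) = 0 := by
        rw [List.countP_eq_zero]
        intro y hy
        rcases List.mem_cons.1 hy with rfl | hy
        · simpa using hx'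
        · simpa using hx'.trans (h1 y hy)
      rw [h0]
      simp only [Nat.zero_le, iff_true]
      cases k with
      | zero => simpa using hx'
      | succ k =>
        have hk' : k < xs.length := by simpa using hk
        rw [List.getD_cons_succ, List.getD_eq_getElem _ _ hk']
        exact hx'.trans (h1 _ (List.getElem_mem hk'))

lemma step_key (N : ℕ) (pos : Fin N → ℝ) (jump : Fin N → Fin 2 → ℝ) (i : Fin N) (a : ℝ) :
    a ≤ brwStep N pos jump i ↔
      N ≤ (Finset.univ.filter fun p : Fin N × Fin 2 => a ≤ pos p.1 + jump p.1 p.2).card + i := by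
  unfold brwStep
  rw [sorted_key a _ (Multiset.pairwise_sort _ _) _ (by simp; omega)]
  have h1 : ∀ s : Multiset ℝ, List.countP (fun x => decide (x < a)) (s.sort (· ≤ ·))
      = Multiset.countP (fun x => x < a) s := by
    intro s
    conv_rhs => rw [← Multiset.sort_eq s (· ≤ ·)]
    rw [Multiset.coe_countP]
  rw [h1, Multiset.countP_map, ← Finset.filter_val, Finset.card_val]
  have h2 := Finset.card_filter_add_card_filter_not (s := (Finset.univ : Finset (Fin N × Fin 2)))
    (fun p => pos p.1 + jump p.1 p.2 < a)
  simp only [not_lt, Finset.card_univ, Fintype.card_prod, Fintype.card_fin] at h2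
  omega

/-- number of particles at or above `a`. -/
def cntGe (N : ℕ) (pos : Fin N → ℝ) (a : ℝ) : ℕ := (Finset.univ.filter fun i => a ≤ pos i).card

lemma cnt_le (N : ℕ) (pos : Fin N → ℝ) (a : ℝ) : cntGe N pos a ≤ N := by
  simpa [cntGe] using Finset.card_le_univ (Finset.univ.filter fun i => a ≤ pos i)

lemma cnt_full (N : ℕ) (pos : Fin N → ℝ) (a : ℝ) : N ≤ cntGe N pos a ↔ ∀ i, a ≤ pos i := by
  constructor
  · intro h i
    have : (Finset.univ.filter fun i => a ≤ pos i) = Finset.univ := by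
      rw [← Finset.card_eq_iff_eq_univ]
      exact le_antisymm (by rw [Fintype.card_fin]; exact cnt_le N pos a) (by simpa [cntGe] using h)
    have := Finset.mem_univ i
    rw [← ‹_ = Finset.univ›] at this
    exact (Finset.mem_filter.1 this).2
  · intro h; simp [cntGe, h]

lemma cnt_step (N : ℕ) (pos : Fin N → ℝ) (jump : Fin N → Fin 2 → ℝ) (a : ℝ) :
    min N (Finset.univ.filter fun p : Fin N × Fin 2 => a ≤ pos p.1 + jump p.1 p.2).card ≤
      cntGe N (brwStep N pos jump) a := by
  unfold cntGe
  simp only [step_key]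
  set c := (Finset.univ.filter fun p : Fin N × Fin 2 => a ≤ pos p.1 + jump p.1 p.2).card
  have : (Finset.univ.filter fun i : Fin N => N ≤ c + i).card = min N c := by
    have h : (Finset.univ.filter fun i : Fin N => ¬ (N ≤ c + i)).card = N - c := by
      have : (fun i : Fin N => ¬ (N ≤ c + i)) = fun i : Fin N => (i : ℕ) < N - c := by
        ext i; omega
      simp only [this]
      rw [Fin.card_filter_val_lt]
      omega
    have h2 := Finset.card_filter_add_card_filter_not (s := (Finset.univ : Finset (Fin N)))
      (fun i => N ≤ c + i)
    simp only [Finset.card_univ, Fintype.card_fin] at h2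
    omega
  rw [this]

lemma cnt_double (N : ℕ) (pos : Fin N → ℝ) (jump : Fin N → Fin 2 → ℝ) (hj : ∀ i j, 0 ≤ jump i j)
    (a : ℝ) : min N (2 * cntGe N pos a) ≤ cntGe N (brwStep N pos jump) a := by
  refine le_trans (min_le_min le_rfl ?_) (cnt_step N pos jump a)
  have : (Finset.univ.filter fun i => a ≤ pos i) ×ˢ (Finset.univ : Finset (Fin 2)) ⊆
      (Finset.univ.filter fun p : Fin N × Fin 2 => a ≤ pos p.1 + jump p.1 p.2) := by
    rintro ⟨i, j⟩ h
    simp only [Finset.mem_product, Finset.mem_filter, Finset.mem_univ, true_and, and_true] at h ⊢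
    linarith [hj i j]
  have := Finset.card_le_card this
  rw [Finset.card_product] at this
  simp only [Finset.card_univ, Fintype.card_fin] at this
  unfold cntGe
  omega

section det

variable {N : ℕ} {x0 : Fin N → ℝ} {jump : ℕ → Fin N → Fin 2 → ℝ}

lemma brw_spread (hj : ∀ n i j, 0 ≤ jump n i j) (s : ℕ) (a : ℝ) (h : 1 ≤ cntGe N (brw N x0 jump s) a)
    (k : ℕ) : min N (2 ^ k) ≤ cntGe N (brw N x0 jump (s + k)) a := by
  induction k with
  | zero => simp; omega
  | succ k ih =>
    have := cnt_double N (brw N x0 jump (s + k)) (jump (s + k)) (hj _) a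
    rw [← add_assoc, brw]
    rw [pow_succ]
    omega

lemma brw_mono (hj : ∀ n i j, 0 ≤ jump n i j) (s : ℕ) (a : ℝ) (h : ∀ i, a ≤ brw N x0 jump s i)
    (k : ℕ) : ∀ i, a ≤ brw N x0 jump (s + k) i := by
  induction k with
  | zero => simpa using h
  | succ k ih =>
    rw [← cnt_full] at ih ⊢
    have := cnt_double N (brw N x0 jump (s + k)) (jump (s + k)) (hj _) a
    rw [← add_assoc, brw]
    omega

lemma brw_block (hj : ∀ n i j, 0 ≤ jump n i j) (s A l : ℕ) (hl : N ≤ 2 ^ l) (b : ℝ)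
    (h : ∀ i, b ≤ brw N x0 jump s i) (r : ℕ) (hr : r < A) (i : Fin N) (j : Fin 2) :
    ∀ i', b + jump (s + r) i j ≤ brw N x0 jump (s + (A + l)) i' := by
  have h1 := brw_mono hj s b h r
  have h2 : 1 ≤ cntGe N (brw N x0 jump (s + r + 1)) (b + jump (s + r) i j) := by
    have h3 := cnt_step N (brw N x0 jump (s + r)) (jump (s + r)) (b + jump (s + r) i j)
    rw [brw]
    have hN : 1 ≤ N := by have := i.2; omega
    have : 1 ≤ (Finset.univ.filter fun p : Fin N × Fin 2 => b + jump (s + r) i j ≤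
        brw N x0 jump (s + r) p.1 + jump (s + r) p.1 p.2).card := by
      rw [Nat.one_le_iff_ne_zero, ← Nat.pos_iff_ne_zero, Finset.card_pos]
      exact ⟨(i, j), by simpa using h1 i⟩
    omega
  have h4 := brw_spread hj _ _ h2 l
  rw [min_eq_left hl, cnt_full] at h4
  have h5 := brw_mono hj _ _ h4 (A - r - 1)
  have : s + r + 1 + l + (A - r - 1) = s + (A + l) := by omega
  rwa [this] at h5

lemma brw_upper (n : ℕ) (hj : ∀ n i j, 0 ≤ jump n i j) (i : Fin N) :
    brw N (fun _ => 0) jump n i ≤ ∑ t ∈ Finset.range n, ∑ p : Fin N × Fin 2, jump t p.1 p.2 := by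
  induction n generalizing i with
  | zero => simp [brw]
  | succ n ih =>
    rw [Finset.sum_range_succ, brw]
    have h := (step_key N (brw N (fun _ => 0) jump n) (jump n) i _).1 le_rfl
    have : 0 < (Finset.univ.filter fun p : Fin N × Fin 2 =>
        brwStep N (brw N (fun _ => 0) jump n) (jump n) i ≤
        brw N (fun _ => 0) jump n p.1 + jump n p.1 p.2).card := by
      have := i.2
      omega
    obtain ⟨p, hp⟩ := Finset.card_pos.1 this
    refine (Finset.mem_filter.1 hp).2.trans (add_le_add (ih _) ?_)
    exact Finset.single_le_sum (f := fun p : Fin N × Fin 2 => jump n p.1 p.2)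
      (fun q _ => hj _ _ _) (Finset.mem_univ p)

/-- max of the jumps in a block -/
def blk (N : ℕ) (jump : ℕ → Fin N → Fin 2 → ℝ) (s A : ℕ) : ℝ :=
  ⨆ p : Fin A × Fin N × Fin 2, jump (s + p.1) p.2.1 p.2.2

lemma brw_lower (hN : 1 ≤ N) (hj : ∀ n i j, 0 ≤ jump n i j) (A l : ℕ) (hA : 1 ≤ A)
    (hl : N ≤ 2 ^ l) (k : ℕ) :
    ∀ i, ∑ t ∈ Finset.range k, blk N jump (t * (A + l)) A ≤
      brw N (fun _ => 0) jump (k * (A + l)) i := by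
  induction k with
  | zero => simp [brw]
  | succ k ih =>
    intro i'
    rw [Finset.sum_range_succ, add_mul, one_mul]
    have : Nonempty (Fin A × Fin N × Fin 2) := ⟨(⟨0, hA⟩, ⟨0, hN⟩, 0)⟩
    obtain ⟨p, hp⟩ := exists_eq_ciSup_of_finite
      (f := fun p : Fin A × Fin N × Fin 2 => jump (k * (A + l) + p.1) p.2.1 p.2.2)
    unfold blk at *
    rw [← hp]
    exact brw_block hj _ A l hl _ ih p.1 p.1.2 _ _ i'

lemma brw_lower' (hN : 1 ≤ N) (hj : ∀ n i j, 0 ≤ jump n i j) (A l : ℕ) (hA : 1 ≤ A)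
    (hl : N ≤ 2 ^ l) (n : ℕ) :
    ∑ t ∈ Finset.range (n / (A + l)), blk N jump (t * (A + l)) A ≤ brwMin N jump n := by
  have : Nonempty (Fin N) := ⟨⟨0, hN⟩⟩
  refine le_ciInf fun i => ?_
  have h := brw_mono hj _ _ (brw_lower hN hj A l hA hl (n / (A + l))) (n - n / (A + l) * (A + l)) i
  rwa [Nat.add_sub_cancel' (Nat.div_mul_le_self _ _)] at h

lemma brw_upper' (hN : 1 ≤ N) (hj : ∀ n i j, 0 ≤ jump n i j) (n : ℕ) :
    brwMax N jump n ≤ ∑ t ∈ Finset.range n, ∑ p : Fin N × Fin 2, jump t p.1 p.2 := by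
  have : Nonempty (Fin N) := ⟨⟨0, hN⟩⟩
  exact ciSup_le fun i => brw_upper n hj i

lemma brwMin_le_brwMax (hN : 1 ≤ N) (n : ℕ) : brwMin N jump n ≤ brwMax N jump n := by
  have : Nonempty (Fin N) := ⟨⟨0, hN⟩⟩
  exact ciInf_le_ciSup (Set.finite_range _).bddBelow (Set.finite_range _).bddAbove

end det

lemma brwStep_meas {Ω : Type*} [MeasurableSpace Ω] (N : ℕ) (pos : Ω → Fin N → ℝ)
    (jp : Ω → Fin N → Fin 2 → ℝ) (h1 : ∀ i, Measurable fun ω => pos ω i)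
    (h2 : ∀ i j, Measurable fun ω => jp ω i j) (i : Fin N) :
    Measurable fun ω => brwStep N (pos ω) (jp ω) i := by
  refine measurable_of_Ici fun a => ?_
  have : (fun ω => brwStep N (pos ω) (jp ω) i) ⁻¹' Ici a =
    {ω | N ≤ (∑ p : Fin N × Fin 2, if a ≤ pos ω p.1 + jp ω p.1 p.2 then 1 else 0) + (i : ℕ)} := by
    ext ω
    simp only [Set.mem_preimage, Set.mem_Ici, Set.mem_ofPred_eq, step_key, Finset.card_filter]
  rw [this]
  refine measurableSet_le measurable_const (Measurable.add ?_ measurable_const)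
  refine Finset.measurable_sum _ fun p _ => ?_
  exact Measurable.ite (measurableSet_le measurable_const ((h1 _).add (h2 _ _)))
    measurable_const measurable_const

lemma brw_meas {Ω : Type*} [MeasurableSpace Ω] (N : ℕ) 
    (jp : Ω → ℕ → Fin N → Fin 2 → ℝ)
    (h2 : ∀ n i j, Measurable fun ω => jp ω n i j) (n : ℕ) (i : Fin N) :
    Measurable fun ω => brw N (fun _ => 0) (jp ω) n i := by
  induction n generalizing i with
  | zero => simp only [brw]; exact measurable_const
  | succ n ih =>
    simp only [brw]
    exact brwStep_meas N _ _ ih (h2 n) i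

section prob

variable {Ω : Type*} [MeasurableSpace Ω] {P : Measure Ω} [IsProbabilityMeasure P] {X : Ω → ℝ}

lemma tail_anti : Antitone (tail P X) := by
  intro a b hab
  exact ENNReal.toReal_mono (measure_ne_top _ _) (measure_mono fun ω h => lt_of_le_of_lt hab h)

lemma tail_nonneg (x : ℝ) : 0 ≤ tail P X x := ENNReal.toReal_nonneg

lemma tail_ii (a b : ℝ) : IntervalIntegrable (tail P X) volume a b :=
  tail_anti.intervalIntegrable

lemma tail_tendsto (hX : Measurable X) : Tendsto (tail P X) atTop (nhds 0) := by
  have : IsProbabilityMeasure (P.map X) := Measure.isProbabilityMeasure_map hX.aemeasurable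
  have h : tail P X = fun x => 1 - cdf (P.map X) x := by
    ext x
    have h1 := probReal_compl_eq_one_sub (μ := P.map X) (measurableSet_Iic (a := x))
    rw [cdf_eq_real, ← h1, Set.compl_Iic, map_measureReal_apply hX measurableSet_Ioi]
    rfl
  rw [h]
  simpa using (tendsto_cdf_atTop (P.map X)).const_sub 1

/-- truncated mean -/
def mT (P : Measure Ω) (X : Ω → ℝ) (T : ℝ) : ℝ := ∫ x in (0 : ℝ)..T, tail P X x

lemma mT_sub (a b : ℝ) : mT P X b - mT P X a = ∫ x in a..b, tail P X x := by
  unfold mT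
  rw [intervalIntegral.integral_interval_sub_left (tail_ii _ _) (tail_ii _ _)]

lemma mT_sub_le {a b : ℝ} (h : a ≤ b) : mT P X b - mT P X a ≤ (b - a) * tail P X a := by
  rw [mT_sub]
  calc _ ≤ ∫ x in a..b, tail P X a := intervalIntegral.integral_mono_on h (tail_ii _ _)
        intervalIntegrable_const (fun x hx => tail_anti hx.1)
    _ = _ := by simp

lemma le_mT_sub {a b : ℝ} (h : a ≤ b) : (b - a) * tail P X b ≤ mT P X b - mT P X a := by
  rw [mT_sub]
  calc _ = ∫ x in a..b, tail P X b := by simp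
    _ ≤ _ := intervalIntegral.integral_mono_on h intervalIntegrable_const (tail_ii _ _)
        (fun x hx => tail_anti hx.2)

lemma mT_mono : Monotone (mT P X) := by
  intro a b h
  have := le_mT_sub (P := P) (X := X) h
  nlinarith [tail_nonneg (P := P) (X := X) b]

lemma mT_zero : mT P X 0 = 0 := by simp [mT]

lemma mT_nonneg {T : ℝ} (h : 0 ≤ T) : 0 ≤ mT P X T := by
  rw [← mT_zero (P := P) (X := X)]; exact mT_mono h

lemma min_integrable (hX : Measurable X) (h0 : ∀ ω, 0 ≤ X ω) {T : ℝ} (hT : 0 ≤ T) :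
    Integrable (fun ω => min (X ω) T) P := by
  refine Integrable.of_bound (hX.min measurable_const).aestronglyMeasurable T (ae_of_all _ fun ω => ?_)
  rw [Real.norm_of_nonneg (le_min (h0 ω) hT)]
  exact min_le_right _ _

lemma integral_min (hX : Measurable X) (h0 : ∀ ω, 0 ≤ X ω) {T : ℝ} (hT : 0 ≤ T) :
    ∫ ω, min (X ω) T ∂P = mT P X T := by
  rw [(min_integrable hX h0 hT).integral_eq_integral_meas_lt
    (ae_of_all _ fun ω => le_min (h0 ω) hT), mT, intervalIntegral.integral_of_le hT,
    integral_Ioc_eq_integral_Ioo]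
  rw [setIntegral_eq_of_subset_of_forall_sdiff_eq_zero measurableSet_Ioi (Ioo_subset_Ioi_self : Ioo 0 T ⊆ Ioi 0)]
  · refine setIntegral_congr_fun measurableSet_Ioo fun t ht => ?_
    simp only [tail, measureReal_def, lt_min_iff, ht.2, and_true]
  · intro t ht
    have : T ≤ t := by
      by_contra h
      exact ht.2 ⟨ht.1, not_le.1 h⟩
    simp [measureReal_def, lt_min_iff, not_lt.2 this]

lemma mT_atTop (hX : Measurable X) (h0 : ∀ ω, 0 ≤ X ω) (hni : ¬ Integrable X P) :
    Tendsto (mT P X) atTop atTop := by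
  rcases tendsto_atTop_of_monotone (mT_mono (P := P) (X := X)) with h | ⟨l, h⟩
  · exact h
  exfalso
  apply hni
  have hb : ∀ T, mT P X T ≤ l := fun T => mT_mono.ge_of_tendsto h T
  have hIntg : IntegrableOn (tail P X) (Ioi 0) := by
    refine integrableOn_Ioi_of_intervalIntegral_norm_bounded l 0 (fun i : ℝ => ?_) tendsto_id
      (Eventually.of_forall fun T => ?_)
    · exact (tail_ii 0 i).1
    · simp only [Real.norm_of_nonneg (tail_nonneg _)]
      exact hb T
  refine ⟨hX.aestronglyMeasurable, ?_⟩
  rw [hasFiniteIntegral_iff_ofReal (ae_of_all _ h0),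
    lintegral_eq_lintegral_meas_lt P (ae_of_all _ h0) hX.aemeasurable]
  have := hIntg.2
  rw [hasFiniteIntegral_iff_ofReal (ae_of_all _ fun x => tail_nonneg x)] at this
  refine lt_of_le_of_lt (lintegral_mono fun t => ?_) this
  simp [tail]

/-- Hypothesis bundle: regular variation of index one. -/
def RV (P : Measure Ω) (X : Ω → ℝ) : Prop := ∀ l : ℝ, 0 < l →
      Tendsto (fun x => tail P X x / tail P X (l * x)) atTop (nhds l)

lemma RV.pos (h : RV P X) (x : ℝ) : 0 < tail P X x := by
  have h1 := (h 1 one_pos).eventually (lt_mem_nhds (zero_lt_one' ℝ))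
  obtain ⟨y, hy, hxy⟩ := (h1.and (eventually_ge_atTop x)).exists
  refine lt_of_lt_of_le ?_ (tail_anti hxy)
  refine lt_of_le_of_ne (tail_nonneg _) fun h0 => ?_
  simp [← h0] at hy

lemma F1_aux (h : RV P X) (k : ℕ) :
    ∀ᶠ x in atTop, mT P X (x / 2 ^ k) + k / 4 * (x * tail P X x) ≤ mT P X x := by
  induction k with
  | zero => simp
  | succ k ih =>
    have hl : (0 : ℝ) < (2 ^ k)⁻¹ := by positivity
    have h1 := (h _ hl).eventually (gt_mem_nhds (show (2 ^ k : ℝ)⁻¹ < 2 * (2 ^ k)⁻¹ by linarith))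
    filter_upwards [ih, h1, eventually_gt_atTop 0] with x hx hx1 hx0
    rw [div_lt_iff₀ (h.pos _)] at hx1
    have h2 : x / 2 ^ (k + 1) ≤ x / 2 ^ k := by
      rw [pow_succ, ← div_div]
      have : 0 < x / 2 ^ k := by positivity
      linarith
    have h3 := le_mT_sub (P := P) (X := X) h2
    have h4 : (2 ^ k : ℝ)⁻¹ * x = x / 2 ^ k := by field_simp
    rw [h4] at hx1
    have h5 : x / 2 ^ k - x / 2 ^ (k + 1) = x * (2 ^ k : ℝ)⁻¹ / 2 := by
      rw [pow_succ]; field_simp; ring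
    rw [h5] at h3
    have := mul_le_mul_of_nonneg_left hx1.le (by positivity : 0 ≤ x / 4)
    push_cast
    nlinarith

lemma F1 (h : RV P X) (hm : Tendsto (mT P X) atTop atTop) :
    Tendsto (fun x => x * tail P X x / mT P X x) atTop (nhds 0) := by
  rw [Metric.tendsto_nhds]
  intro ε hε
  obtain ⟨k, hk⟩ := exists_nat_gt (4 / ε)
  filter_upwards [F1_aux h k, eventually_gt_atTop 0, hm.eventually_gt_atTop 0] with x hx hx0 hm0
  have h1 := mT_nonneg (P := P) (X := X) (show 0 ≤ x / 2 ^ k by positivity)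
  have h2 : 0 < x * tail P X x := mul_pos hx0 (h.pos x)
  rw [Real.dist_eq, sub_zero, abs_of_nonneg (by positivity), div_lt_iff₀ hm0]
  rw [div_lt_iff₀ hε] at hk
  nlinarith

lemma F2 (h : RV P X) (hm : Tendsto (mT P X) atTop atTop) (l : ℝ) (hl : 0 < l) :
    Tendsto (fun x => mT P X (l * x) / mT P X x) atTop (nhds 1) := by
  have key : ∀ l : ℝ, 1 ≤ l → Tendsto (fun x => mT P X (l * x) / mT P X x) atTop (nhds 1) := by
    intro l hl
    have h1 : Tendsto (fun x => 1 + (l - 1) * (x * tail P X x / mT P X x)) atTop (nhds 1) := by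
      simpa using ((F1 h hm).const_mul (l - 1)).const_add 1
    refine tendsto_of_tendsto_of_tendsto_of_le_of_le' tendsto_const_nhds h1 ?_ ?_
    · filter_upwards [eventually_gt_atTop 0, hm.eventually_gt_atTop 0] with x hx0 hm0
      rw [le_div_iff₀ hm0, one_mul]
      exact mT_mono (by nlinarith)
    · filter_upwards [eventually_gt_atTop 0, hm.eventually_gt_atTop 0] with x hx0 hm0
      have := mT_sub_le (P := P) (X := X) (show x ≤ l * x by nlinarith)
      rw [div_le_iff₀ hm0]
      field_simp
      linarith
  rcases le_total 1 l with h1 | h1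
  · exact key l h1
  · have h2 := (key l⁻¹ ((one_le_inv₀ hl).2 h1)).comp (tendsto_id.const_mul_atTop hl)
    have h3 := h2.inv₀ one_ne_zero
    rw [inv_one] at h3
    refine h3.congr fun x => ?_
    simp [hl.ne']

lemma cheb {ι : Type*} (s : Finset ι) (Z : ι → Ω → ℝ) (T μ : ℝ) (hZ : ∀ i, Measurable (Z i))
    (h0 : ∀ i ω, 0 ≤ Z i ω) (hT : ∀ i ω, Z i ω ≤ T)
    (hi : Set.Pairwise (s : Set ι) fun i j => IndepFun (Z i) (Z j) P)
    (hμ : ∀ i ∈ s, ∫ ω, Z i ω ∂P = μ) (ε : ℝ) (hε : 0 < ε) (hs : 0 < (s.card : ℝ) * μ) :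
    P.real {ω | ε * (s.card * μ) ≤ |∑ i ∈ s, Z i ω - s.card * μ|} ≤
      T / (ε ^ 2 * (s.card * μ)) := by
  have hL : ∀ i, MemLp (Z i) 2 P := fun i =>
    MemLp.of_bound (hZ i).aestronglyMeasurable T (ae_of_all _ fun ω => by
      rw [Real.norm_of_nonneg (h0 i ω)]; exact hT i ω)
  have hI : ∀ i, Integrable (Z i) P := fun i => (hL i).integrable one_le_two
  have h1 : P[∑ i ∈ s, Z i] = s.card * μ := by
    simp only [Finset.sum_apply]
    rw [integral_finsetSum _ fun i _ => hI i, Finset.sum_congr rfl hμ]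
    simp
  have hv : ∀ i ∈ s, variance (Z i) P ≤ T * μ := by
    intro i hi
    refine (variance_le_expectation_sq (hZ i).aestronglyMeasurable).trans ?_
    rw [← hμ i hi, ← integral_const_mul]
    refine integral_mono (hL i).integrable_sq ((hI i).const_mul T) fun ω => ?_
    simp only [Pi.pow_apply, sq]
    exact mul_le_mul_of_nonneg_right (hT i ω) (h0 i ω)
  have hvs : variance (∑ i ∈ s, Z i) P ≤ s.card * (T * μ) := by
    rw [IndepFun.variance_sum (fun i _ => hL i) hi]
    exact (Finset.sum_le_sum hv).trans (by simp)
  have hc := meas_ge_le_variance_div_sq (memLp_finsetSum' s fun i _ => hL i) (mul_pos hε hs)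
  rw [h1] at hc
  simp only [Finset.sum_apply] at hc
  rw [measureReal_def]
  refine (ENNReal.toReal_mono ENNReal.ofReal_ne_top hc).trans ?_
  rw [ENNReal.toReal_ofReal (by have := variance_nonneg (∑ i ∈ s, Z i) P; positivity)]
  calc _ ≤ s.card * (T * μ) / (ε * (s.card * μ)) ^ 2 := by gcongr
    _ = _ := by
      have : (s.card : ℝ) ≠ 0 := fun h => by simp [h] at hs
      have : μ ≠ 0 := fun h => by simp [h] at hs
      field_simp

lemma hinv_nonempty (hX : Measurable X) {y : ℝ} (hy : 0 < y) :
    {x : ℝ | 0 ≤ x ∧ tail P X x ≤ y⁻¹}.Nonempty := by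
  have h := (tail_tendsto (P := P) hX).eventually (gt_mem_nhds (inv_pos.2 hy))
  obtain ⟨x, h1, h2⟩ := ((eventually_ge_atTop 0).and h).exists
  exact ⟨x, h1, h2.le⟩

lemma hinv_nonneg (y : ℝ) : 0 ≤ hinv P X y := Real.sInf_nonneg fun _ h => h.1

lemma tail_of_gt (hX : Measurable X) {x y : ℝ} (hy : 0 < y) (h : hinv P X y < x) :
    tail P X x ≤ y⁻¹ := by
  obtain ⟨z, hz, hzx⟩ := exists_lt_of_csInf_lt (hinv_nonempty hX hy) h
  exact (tail_anti hzx.le).trans hz.2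

lemma tail_of_lt {x y : ℝ} (h0 : 0 ≤ x) (h : x < hinv P X y) :
    y⁻¹ < tail P X x := by
  by_contra hc
  exact absurd (csInf_le ⟨0, fun z hz => hz.1⟩ (show x ∈ {x : ℝ | 0 ≤ x ∧ tail P X x ≤ y⁻¹} from
    ⟨h0, not_lt.1 hc⟩)) (not_le.2 h)

lemma hinv_atTop (hX : Measurable X) (h : RV P X) : Tendsto (hinv P X) atTop atTop := by
  rw [tendsto_atTop]
  intro b
  have h1 := tendsto_inv_atTop_zero.eventually (gt_mem_nhds (h.pos (max b 0)))
  filter_upwards [h1, eventually_gt_atTop 0] with y hy hy0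
  refine (le_max_left b 0).trans (le_csInf (hinv_nonempty hX hy0) fun x hx => ?_)
  by_contra hc
  have := (tail_anti (P := P) (X := X) (not_le.1 hc).le).trans hx.2
  linarith

lemma hinv_nat (hX : Measurable X) (h : RV P X) :
    Tendsto (fun n : ℕ => hinv P X n) atTop atTop :=
  (hinv_atTop hX h).comp tendsto_natCast_atTop_atTop

lemma L2 (hX : Measurable X) (h : RV P X) (hm : Tendsto (mT P X) atTop atTop) :
    Tendsto (fun n : ℕ => hinv P X n / (n * mT P X (hinv P X n))) atTop (nhds 0) := by
  have ha := hinv_nat hX h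
  have ha2 : Tendsto (fun n : ℕ => hinv P X n / 2) atTop atTop := ha.atTop_div_const two_pos
  have h1 := ((F1 h hm).comp ha2).const_mul 2
  rw [mul_zero] at h1
  refine squeeze_zero' ?_ ?_ h1
  · exact Eventually.of_forall fun n =>
      div_nonneg (hinv_nonneg _) (mul_nonneg (by positivity) (mT_nonneg (hinv_nonneg _)))
  · filter_upwards [ha.eventually_gt_atTop 0, (hm.comp ha2).eventually_gt_atTop 0,
      eventually_gt_atTop 0] with n hn hm0 hn0
    simp only [Function.comp] at hm0 ⊢
    set a := hinv P X n
    have h2 := tail_of_lt (P := P) (X := X) (y := n) (x := a / 2) (by linarith)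
      (show a / 2 < a by linarith)
    have h3 : mT P X (a / 2) ≤ mT P X a := mT_mono (by linarith)
    have hn0' : (0 : ℝ) < n := by exact_mod_cast hn0
    calc a / (n * mT P X a) = a * (n : ℝ)⁻¹ / mT P X a := by field_simp
      _ ≤ a * tail P X (a / 2) / mT P X (a / 2) := by
        have := h.pos (a / 2)
        gcongr
      _ = _ := by ring

lemma L1 (hX : Measurable X) (h : RV P X) (hm : Tendsto (mT P X) atTop atTop) (l : ℝ) (hl : 0 < l) :
    Tendsto (fun n : ℕ => mT P X (l * hinv P X n) / mT P X (hinv P X n)) atTop (nhds 1) :=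
  (F2 h hm l hl).comp (hinv_nat hX h)

lemma L3 (hX : Measurable X) (h : RV P X) (hm : Tendsto (mT P X) atTop atTop) (c : ℝ) (hc : 0 < c) :
    Tendsto (fun n : ℕ => (mT P X (c * hinv P X n) - mT P X c) / mT P X (hinv P X n))
      atTop (nhds 1) := by
  have h1 : Tendsto (fun n : ℕ => mT P X c / mT P X (hinv P X n)) atTop (nhds 0) :=
    (hm.comp (hinv_nat hX h)).const_div_atTop _
  simpa [sub_div] using (L1 hX h hm c hc).sub h1

lemma bN_eq (N n : ℕ) (hc : 0 < cN P X N) : bN P X N n =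
    (mT P X (cN P X N * hinv P X n) - mT P X (cN P X N)) / (cN P X N * tail P X (cN P X N)) := by
  unfold bN
  rw [intervalIntegral.integral_div,
    intervalIntegral.integral_comp_mul_left (fun x => tail P X x) hc.ne', mT_sub, mul_one]
  rw [smul_eq_mul, ← div_div]
  congr 1
  rw [div_eq_inv_mul]

lemma tail_eq {Y : Ω → ℝ} (hX : Measurable X) (hY : Measurable Y) (h : P.map Y = P.map X) :
    tail P Y = tail P X := by
  ext x
  have h1 := congrArg (fun μ => μ (Ioi x)) h
  simp only [Measure.map_apply hX measurableSet_Ioi, Measure.map_apply hY measurableSet_Ioi] at h1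
  exact congrArg ENNReal.toReal h1

lemma up_bound (hX : Measurable X) (hRV : RV P X) (hm : Tendsto (mT P X) atTop atTop)
    {N : ℕ} (hN : 1 ≤ N) (ξ : ℕ → Fin N → Fin 2 → Ω → ℝ)
    (hξm : ∀ n i j, Measurable (ξ n i j)) (hξ0 : ∀ n i j ω, 0 ≤ ξ n i j ω)
    (hξt : ∀ n i j, tail P (ξ n i j) = tail P X)
    (hi : iIndepFun (fun p : ℕ × Fin N × Fin 2 => ξ p.1 p.2.1 p.2.2) P)
    (c : ℝ) (hc : 0 < c) (ε : ℝ) (hε : 0 < ε) :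
    ∀ᶠ n : ℕ in atTop, P.real {ω | (1 + ε) * (2 * N * n * (mT P X (c * hinv P X n) - mT P X c)) <
      ∑ t ∈ Finset.range n, ∑ p : Fin N × Fin 2, ξ t p.1 p.2 ω} ≤ ε := by
  have hN' : (1 : ℝ) ≤ N := by exact_mod_cast hN
  set l : ℝ := 8 * N / ε with hl
  have hl0 : 0 < l := by positivity
  have ha := hinv_nat hX hRV
  have e1 := L1 hX hRV hm (l * 2) (by positivity)
  have e2 := L3 hX hRV hm c hc
  have e3 : Tendsto (fun n : ℕ => (mT P X (c * hinv P X n) - mT P X c) /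
      mT P X (l * 2 * hinv P X n)) atTop (nhds 1) := by
    have := e2.div e1 one_ne_zero
    rw [div_one] at this
    refine this.congr' ?_
    filter_upwards [(hm.comp ha).eventually_gt_atTop 0] with n hn
    simp only [Function.comp, Pi.div_apply] at hn ⊢
    field_simp
  have e4 : Tendsto (fun n : ℕ => (l * 2 * hinv P X n) / ((ε / 2) ^ 2 *
      ((2 * N * n) * mT P X (l * 2 * hinv P X n)))) atTop (nhds 0) := by
    have := ((L2 hX hRV hm).div e1 one_ne_zero).const_mul (l * 2 / ((ε / 2) ^ 2 * (2 * N)))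
    rw [zero_div, mul_zero] at this
    refine this.congr' ?_
    filter_upwards [(hm.comp ha).eventually_gt_atTop 0] with n hn
    simp only [Function.comp, Pi.div_apply] at hn ⊢
    field_simp
  have e5 := ((hRV l hl0).comp (ha.const_mul_atTop two_pos)).eventually
    (lt_mem_nhds (show l / 2 < l by linarith))
  have hε2 : (1 + ε / 2) / (1 + ε) < 1 := by rw [div_lt_one (by linarith)]; linarith
  filter_upwards [e3.eventually (lt_mem_nhds hε2), e4.eventually (gt_mem_nhds (half_pos hε)), e5,
    eventually_gt_atTop 0, ha.eventually_gt_atTop 0,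
    ((hm.comp (ha.const_mul_atTop (show 0 < l * 2 by positivity)))).eventually_gt_atTop 0]
    with n h1 h2 h3 hn ha0 hw0
  have hn' : (0 : ℝ) < n := by exact_mod_cast hn
  simp only [Function.comp] at h3 hw0
  set a := hinv P X n
  set T := l * 2 * a with hT
  have hT0 : 0 < T := by positivity
  set s : Finset (ℕ × Fin N × Fin 2) := Finset.range n ×ˢ Finset.univ with hs
  have hcard : (s.card : ℝ) = 2 * N * n := by
    simp [hs, Finset.card_product]; ring
  set Z : ℕ × Fin N × Fin 2 → Ω → ℝ := fun p ω => min (ξ p.1 p.2.1 p.2.2 ω) T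
  have hch := cheb (P := P) s Z T (mT P X T) (fun p => (hξm _ _ _).min measurable_const)
    (fun p ω => le_min (hξ0 _ _ _ _) hT0.le) (fun p ω => min_le_right _ _)
    (fun p _ q _ hpq => (hi.indepFun hpq).comp (φ := fun x => min x T) (ψ := fun x => min x T)
      (measurable_id.min measurable_const) (measurable_id.min measurable_const))
    (fun p _ => by
      rw [integral_min (hξm _ _ _) (hξ0 _ _ _) hT0.le, mT, hξt]; rfl)
    (ε / 2) (half_pos hε) (by rw [hcard]; positivity)
  rw [hcard] at hch
  have hsub : {ω | (1 + ε) * (2 * N * n * (mT P X (c * a) - mT P X c)) <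
      ∑ t ∈ Finset.range n, ∑ p : Fin N × Fin 2, ξ t p.1 p.2 ω} ⊆
      (⋃ p ∈ s, {ω | T < ξ p.1 p.2.1 p.2.2 ω}) ∪
      {ω | (ε / 2) * (2 * N * n * mT P X T) ≤ |∑ p ∈ s, Z p ω - 2 * N * n * mT P X T|} := by
    intro ω hω
    by_cases hb : ω ∈ ⋃ p ∈ s, {ω | T < ξ p.1 p.2.1 p.2.2 ω}
    · exact Or.inl hb
    right
    have hb' : ∀ p ∈ s, ξ p.1 p.2.1 p.2.2 ω ≤ T := by
      intro p hp
      by_contra hc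
      exact hb (Set.mem_biUnion hp (not_le.1 hc))
    have hsum : ∑ p ∈ s, Z p ω = ∑ t ∈ Finset.range n, ∑ p : Fin N × Fin 2, ξ t p.1 p.2 ω := by
      rw [Finset.sum_congr rfl (fun p hp => min_eq_left (hb' p hp)), hs, Finset.sum_product]
    simp only [Set.mem_ofPred_eq] at hω ⊢
    rw [hsum]
    refine le_trans ?_ (le_abs_self _)
    rw [div_lt_div_iff₀ (by positivity) hw0] at h1
    have : 0 < 2 * (N : ℝ) * n := by positivity
    nlinarith
  have hf : P.real (⋃ p ∈ s, {ω | T < ξ p.1 p.2.1 p.2.2 ω}) ≤ ε / 2 := by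
    refine (measureReal_biUnion_finset_le _ _).trans ?_
    have h4 : ∀ p ∈ s, P.real {ω | T < ξ p.1 p.2.1 p.2.2 ω} = tail P X T := by
      intro p _
      rw [← hξt p.1 p.2.1 p.2.2]; rfl
    rw [Finset.sum_congr rfl h4, Finset.sum_const, nsmul_eq_mul, hcard]
    have h5 := tail_of_gt (P := P) hX hn' (show hinv P X n < 2 * a by change a < 2 * a; linarith)
    rw [lt_div_iff₀ (hRV.pos _), ← mul_assoc, ← hT] at h3
    have h6 : tail P X T ≤ 2 / l * (n : ℝ)⁻¹ := by
      rw [div_mul_eq_mul_div, le_div_iff₀ hl0]; nlinarith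
    calc _ ≤ 2 * N * n * (2 / l * (n : ℝ)⁻¹) := by gcongr
      _ = ε / 2 := by rw [hl]; field_simp; ring
  calc _ ≤ _ := measureReal_mono hsub
    _ ≤ _ := measureReal_union_le _ _
    _ ≤ ε / 2 + ε / 2 := add_le_add hf (hch.trans h2.le)
    _ = ε := by ring

lemma blk_meas {N : ℕ} (ξ : ℕ → Fin N → Fin 2 → Ω → ℝ)
    (hξm : ∀ n i j, Measurable (ξ n i j)) (s A : ℕ) :
    Measurable fun ω => blk N (fun n i j => ξ n i j ω) s A := by
  unfold blk
  exact Measurable.iSup fun p => hξm _ _ _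

lemma blk_tail {N : ℕ} (hX : Measurable X) (hN : 1 ≤ N) (ξ : ℕ → Fin N → Fin 2 → Ω → ℝ)
    (hξm : ∀ n i j, Measurable (ξ n i j))
    (hξt : ∀ n i j, tail P (ξ n i j) = tail P X)
    (hi : iIndepFun (fun p : ℕ × Fin N × Fin 2 => ξ p.1 p.2.1 p.2.2) P) (s A : ℕ) (hA : 1 ≤ A)
    (y : ℝ) : tail P (fun ω => blk N (fun n i j => ξ n i j ω) s A) y =
      1 - (1 - tail P X y) ^ (A * (N * 2)) := by
  have : Nonempty (Fin A × Fin N × Fin 2) := ⟨(⟨0, hA⟩, ⟨0, hN⟩, 0)⟩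
  have hi' : iIndepFun (fun p : Fin A × Fin N × Fin 2 => ξ (s + p.1) p.2.1 p.2.2) P := by
    refine iIndepFun.precomp (g := fun p : Fin A × Fin N × Fin 2 => (s + (p.1 : ℕ), p.2)) ?_ hi
    rintro ⟨a, b⟩ ⟨a', b'⟩ h
    simp only [Prod.mk.injEq] at h
    ext1
    · exact Fin.ext (by simpa using h.1)
    · exact h.2
  have h1 := hi'.measure_inter_preimage_eq_mul Finset.univ (sets := fun _ => Iic y)
    (fun _ _ => measurableSet_Iic)
  have h2 : ∀ n i j, P.real (ξ n i j ⁻¹' Iic y) = 1 - tail P X y := by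
    intro n i j
    rw [← hξt n i j]
    have h3 := probReal_compl_eq_one_sub (μ := P) ((hξm n i j) (measurableSet_Iic (a := y)))
    have h4 : tail P (ξ n i j) y = P.real (ξ n i j ⁻¹' Iic y)ᶜ := by
      rw [← Set.preimage_compl, Set.compl_Iic]; rfl
    rw [h4, h3]; ring
  have h3 : {ω | y < blk N (fun n i j => ξ n i j ω) s A} =
      (⋂ p ∈ (Finset.univ : Finset (Fin A × Fin N × Fin 2)),
        ξ (s + p.1) p.2.1 p.2.2 ⁻¹' Iic y)ᶜ := by
    ext ω
    simp only [blk, Set.mem_ofPred_eq, Set.mem_compl_iff, Set.mem_iInter, Finset.mem_univ,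
      forall_true_left, Set.mem_preimage, Set.mem_Iic, not_forall, not_le]
    rw [lt_ciSup_iff (Set.finite_range _).bddAbove]
  have h4 : P.real (⋂ p ∈ (Finset.univ : Finset (Fin A × Fin N × Fin 2)),
        ξ (s + p.1) p.2.1 p.2.2 ⁻¹' Iic y) = (1 - tail P X y) ^ (A * (N * 2)) := by
    rw [measureReal_def, h1, ENNReal.toReal_prod]
    simp only [← measureReal_def, h2]
    simp
  rw [tail, h3, ← measureReal_def, probReal_compl_eq_one_sub, h4]
  exact Finset.measurableSet_biInter _ fun p _ => hξm _ _ _ measurableSet_Iic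

lemma blk_indep {N : ℕ} (ξ : ℕ → Fin N → Fin 2 → Ω → ℝ)
    (hξm : ∀ n i j, Measurable (ξ n i j))
    (hi : iIndepFun (fun p : ℕ × Fin N × Fin 2 => ξ p.1 p.2.1 p.2.2) P) (A l k k' : ℕ)
    (hk : k ≠ k') : IndepFun (fun ω => blk N (fun n i j => ξ n i j ω) (k * (A + l)) A)
      (fun ω => blk N (fun n i j => ξ n i j ω) (k' * (A + l)) A) P := by
  let g : ℕ → Fin A × Fin N × Fin 2 → ℕ × Fin N × Fin 2 := fun k p => (k * (A + l) + p.1, p.2)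
  have hdiv : ∀ k (r : Fin A), (k * (A + l) + r) / (A + l) = k := by
    intro k r
    have := r.2
    rw [mul_comm, Nat.mul_add_div (by omega), Nat.div_eq_of_lt (by omega), add_zero]
  have hd : Disjoint (Finset.univ.image (g k)) (Finset.univ.image (g k')) := by
    rw [Finset.disjoint_left]
    intro x hx hx'
    obtain ⟨p, -, rfl⟩ := Finset.mem_image.1 hx
    obtain ⟨q, -, hq⟩ := Finset.mem_image.1 hx'
    simp only [g, Prod.mk.injEq] at hq
    have h := hq.1
    have h2 := hdiv k p.1
    rw [← h, hdiv] at h2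
    exact hk h2.symm
  have h := hi.indepFun_finset _ _ hd (fun p => hξm _ _ _)
  have hφ : ∀ k, Measurable (fun f : (Finset.univ.image (g k) : Finset _) → ℝ =>
      ⨆ p : Fin A × Fin N × Fin 2, f ⟨g k p, Finset.mem_image_of_mem _ (Finset.mem_univ p)⟩) :=
    fun k => Measurable.iSup fun p => measurable_pi_apply _
  exact h.comp (hφ k) (hφ k')

lemma bern (p : ℝ) (hp : 0 ≤ p) (hp1 : p ≤ 1) (M : ℕ) (δ : ℝ) (h : M * p ≤ δ) :
    M * p / (1 + δ) ≤ 1 - (1 - p) ^ M := by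
  have h1 := one_add_mul_le_pow (show (-2 : ℝ) ≤ p by linarith) M
  have h2 : (1 - p) ^ M * (1 + p) ^ M ≤ 1 := by
    rw [← mul_pow]; exact pow_le_one₀ (by nlinarith) (by nlinarith)
  have h3 : 0 ≤ (1 - p) ^ M := pow_nonneg (by linarith) M
  have hM : 0 ≤ M * p := by positivity
  have h4 : (1 - p) ^ M * (1 + M * p) ≤ 1 :=
    (mul_le_mul_of_nonneg_left h1 h3).trans h2
  have h5 : M * p / (1 + M * p) ≤ 1 - (1 - p) ^ M := by
    rw [div_le_iff₀ (by linarith)]; nlinarith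
  refine le_trans ?_ h5
  gcongr

lemma tail_le_one (x : ℝ) : tail P X x ≤ 1 := by
  have := measureReal_le_one (μ := P) (s := {ω | x < X ω})
  exact this

lemma low_bound (hX : Measurable X) (hRV : RV P X) (hm : Tendsto (mT P X) atTop atTop)
    {N : ℕ} (hN : 1 ≤ N) (ξ : ℕ → Fin N → Fin 2 → Ω → ℝ)
    (hξm : ∀ n i j, Measurable (ξ n i j)) (hξ0 : ∀ n i j ω, 0 ≤ ξ n i j ω)
    (hξt : ∀ n i j, tail P (ξ n i j) = tail P X)
    (hi : iIndepFun (fun p : ℕ × Fin N × Fin 2 => ξ p.1 p.2.1 p.2.2) P)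
    (c : ℝ) (hc : 0 < c) (ε : ℝ) (hε : 0 < ε) (hε1 : ε < 1) :
    ∀ᶠ n : ℕ in atTop, P.real {ω | brwMin N (fun n i j => ξ n i j ω) n <
      (1 - ε) * (2 * N * n * (mT P X (c * hinv P X n) - mT P X c))} ≤ ε := by
  have hN' : (1 : ℝ) ≤ N := by exact_mod_cast hN
  set δ := ε / 4 with hδ
  have hδ0 : 0 < δ := by positivity
  obtain ⟨l, hl⟩ : ∃ l, N ≤ 2 ^ l := ⟨N, Nat.lt_two_pow_self.le⟩
  obtain ⟨A, hA⟩ := exists_nat_gt ((l : ℝ) / δ)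
  have hA0 : (0 : ℝ) < A := lt_of_le_of_lt (by positivity) hA
  have hA1 : 1 ≤ A := by exact_mod_cast hA0
  set L := A + l with hL
  have hL0 : (0 : ℝ) < (L : ℝ) := by rw [hL]; push_cast; positivity
  have hAL : 1 - δ ≤ (A : ℝ) / L := by
    rw [div_lt_iff₀ hδ0] at hA
    rw [le_div_iff₀ hL0, hL]; push_cast; nlinarith
  set M := A * (N * 2) with hM
  have hMr : (M : ℝ) = 2 * N * A := by rw [hM]; push_cast; ring
  have hM0 : (0 : ℝ) < M := by rw [hMr]; positivity
  obtain ⟨K, hK0, hK⟩ : ∃ K : ℝ, 0 ≤ K ∧ M * tail P X K ≤ δ := by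
    have h := (tail_tendsto (P := P) hX).eventually (gt_mem_nhds (show 0 < δ / M by positivity))
    obtain ⟨x, h1, h2⟩ := ((eventually_ge_atTop 0).and h).exists
    refine ⟨x, h1, ?_⟩
    rw [lt_div_iff₀ hM0] at h2
    linarith
  -- truncated mean of the block maximum
  set μ : ℝ → ℝ := fun T => ∫ y in (0 : ℝ)..T, (1 - (1 - tail P X y) ^ M) with hμ
  set Y : ℕ → Ω → ℝ := fun k ω => blk N (fun n i j => ξ n i j ω) (k * L) A
  have hYm : ∀ k, Measurable (Y k) := fun k => blk_meas ξ hξm _ _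
  have hY0 : ∀ k ω, 0 ≤ Y k ω := fun k ω => Real.iSup_nonneg fun p => hξ0 _ _ _ _
  have hYt : ∀ k, tail P (Y k) = fun y => 1 - (1 - tail P X y) ^ M := fun k => by
    ext y; exact blk_tail hX hN ξ hξm hξt hi _ _ hA1 y
  have hYμ : ∀ k T, mT P (Y k) T = μ T := fun k T => by rw [mT, hYt]
  have hμlow : ∀ T, K ≤ T → M / (1 + δ) * (mT P X T - mT P X K) ≤ μ T := by
    intro T hT
    rw [← hYμ 0 T, mT_sub, ← intervalIntegral.integral_const_mul]
    have h1 : mT P (Y 0) T - mT P (Y 0) K ≤ mT P (Y 0) T := by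
      linarith [mT_nonneg (P := P) (X := Y 0) hK0]
    refine le_trans ?_ h1
    rw [mT_sub]
    refine intervalIntegral.integral_mono_on hT ((tail_ii _ _).const_mul _) (tail_ii _ _) ?_
    intro y hy
    rw [hYt]
    have := bern (tail P X y) (tail_nonneg y) (tail_le_one y) M δ
      (le_trans (mul_le_mul_of_nonneg_left (tail_anti hy.1) hM0.le) hK)
    calc _ = M * tail P X y / (1 + δ) := by ring
      _ ≤ _ := this
  have ha := hinv_nat hX hRV
  have hw := hm.comp ha
  have e2 := L3 hX hRV hm c hc
  have e3 : Tendsto (fun n : ℕ => (1 / (L : ℝ) - 1 / n) * (A / (1 + δ)) *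
      (1 - mT P X K / mT P X (hinv P X n))) atTop (nhds (1 / L * (A / (1 + δ)))) := by
    have h1 : Tendsto (fun n : ℕ => 1 / (L : ℝ) - 1 / n) atTop (nhds (1 / L)) := by
      simpa using (tendsto_one_div_atTop_nhds_zero_nat (𝕜 := ℝ)).const_sub (1 / (L : ℝ))
    have h2 : Tendsto (fun n : ℕ => 1 - mT P X K / mT P X (hinv P X n)) atTop (nhds 1) := by
      simpa using (hw.const_div_atTop (mT P X K)).const_sub 1
    simpa using (h1.mul_const (A / (1 + δ))).mul h2
  have hlim : (1 - ε) * 1 < (1 - δ) * (1 / L * (A / (1 + δ))) := by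
    have h1 : 1 / (L : ℝ) * (A / (1 + δ)) = A / L / (1 + δ) := by field_simp
    rw [h1]
    have h2 : (1 - δ) / (1 + δ) ≤ A / L / (1 + δ) := by gcongr
    have h3 : (1 - 2 * δ) ≤ (1 - δ) / (1 + δ) := by
      rw [le_div_iff₀ (by linarith)]; nlinarith
    have : (1 - δ) * (1 - 2 * δ) ≤ (1 - δ) * (A / L / (1 + δ)) :=
      mul_le_mul_of_nonneg_left (h3.trans h2) (by linarith)
    nlinarith
  have e4 := (e2.const_mul (1 - ε)).eventually_lt (e3.const_mul (1 - δ)) hlim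
  have e5 := ((L2 hX hRV hm).const_mul (1 / (δ ^ 2 * ((1 - ε) * N)))).eventually
    (gt_mem_nhds (show 1 / (δ ^ 2 * ((1 - ε) * N)) * 0 < ε by simpa using hε))
  filter_upwards [e4, e5, e2.eventually (lt_mem_nhds (show (1 / 2 : ℝ) < 1 by norm_num)),
    hw.eventually_gt_atTop 0, ha.eventually_gt_atTop 0, ha.eventually_ge_atTop K,
    hw.eventually_ge_atTop (mT P X K), eventually_ge_atTop L] with n h1 h2 h3 hw0 ha0 haK hwK hnL
  simp only [Function.comp] at hw0 hwK
  set a := hinv P X n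
  set D := mT P X (c * a) - mT P X c
  set w := mT P X a
  have hLn : 0 < L := by exact_mod_cast hL0
  have hn' : (0 : ℝ) < n := by exact_mod_cast (lt_of_lt_of_le hLn hnL)
  have hq : (n : ℝ) / L - 1 ≤ (n / L : ℕ) := by
    have := Nat.lt_floor_add_one ((n : ℝ) / L)
    rw [Nat.floor_div_eq_div] at this
    linarith
  have hq0 : (0 : ℝ) ≤ n / L - 1 := by
    rw [sub_nonneg, le_div_iff₀ hL0, one_mul]; exact_mod_cast hnL
  have hqμ : (1 - ε) * (2 * N * n * D) ≤ (1 - δ) * ((n / L : ℕ) * μ a) := by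
    have h4 : ((n : ℝ) / L - 1) * (M / (1 + δ) * (w - mT P X K)) ≤ (n / L : ℕ) * μ a :=
      mul_le_mul hq (hμlow a haK) (mul_nonneg (by positivity) (sub_nonneg.2 hwK)) (by positivity)
    refine le_trans ?_ (mul_le_mul_of_nonneg_left h4 (by linarith))
    have h5 := mul_le_mul_of_nonneg_left h1.le (show 0 ≤ 2 * N * n * w by positivity)
    calc _ = 2 * N * n * w * ((1 - ε) * (D / w)) := by field_simp
      _ ≤ _ := h5
      _ = _ := by rw [hMr]; field_simp
  have hD : w / 2 < D := by
    rw [lt_div_iff₀ hw0] at h3; linarith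
  have hqμ2 : (1 - ε) * N * n * w ≤ (n / L : ℕ) * μ a := by
    have h6 : (1 - ε) * N * n * w ≤ (1 - ε) * (2 * N * n * D) := by
      have : 0 ≤ (1 - ε) * (N * n) := mul_nonneg (by linarith) (by positivity)
      nlinarith
    have h7 := h6.trans hqμ
    have h8 : 0 < (1 - ε) * N * n * w := by
      have : 0 < 1 - ε := by linarith
      positivity
    have h9 : 0 < (n / L : ℕ) * μ a := by
      by_contra hcon
      have : (1 - δ) * ((n / L : ℕ) * μ a) ≤ 0 :=
        mul_nonpos_of_nonneg_of_nonpos (by linarith) (not_lt.1 hcon)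
      linarith
    linarith [mul_pos hδ0 h9]
  have hpos : 0 < (1 - ε) * N * n * w := by
    have : 0 < 1 - ε := by linarith
    positivity
  have hch := cheb (P := P) (Finset.range (n / L)) (fun k ω => min (Y k ω) a) a (μ a)
    (fun k => (hYm k).min measurable_const)
    (fun p ω => le_min (hY0 _ _) ha0.le) (fun p ω => min_le_right _ _)
    (fun p _ q _ hpq => (blk_indep ξ hξm hi A l p q hpq).comp (φ := fun x => min x a)
      (ψ := fun x => min x a)
      (measurable_id.min measurable_const) (measurable_id.min measurable_const))
    (fun k _ => by rw [integral_min (hYm k) (hY0 k) ha0.le, hYμ])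
    δ hδ0 (by rw [Finset.card_range]; linarith)
  rw [Finset.card_range] at hch
  have hsub : {ω | brwMin N (fun n i j => ξ n i j ω) n < (1 - ε) * (2 * N * n * D)} ⊆
      {ω | δ * ((n / L : ℕ) * μ a) ≤
        |∑ k ∈ Finset.range (n / L), min (Y k ω) a - (n / L : ℕ) * μ a|} := by
    intro ω hω
    simp only [Set.mem_ofPred_eq] at hω ⊢
    have h4 := brw_lower' (jump := fun n i j => ξ n i j ω) hN (fun n i j => hξ0 n i j ω) A l hA1 hl n
    have h5 : ∑ k ∈ Finset.range (n / L), min (Y k ω) a ≤ ∑ k ∈ Finset.range (n / L), Y k ω :=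
      Finset.sum_le_sum fun k _ => min_le_left _ _
    refine le_trans ?_ (neg_le_abs _)
    have h6 : ∑ k ∈ Finset.range (n / L), Y k ω ≤ brwMin N (fun n i j => ξ n i j ω) n := h4
    linarith
  refine (measureReal_mono hsub).trans (hch.trans ?_)
  calc a / (δ ^ 2 * ((n / L : ℕ) * μ a)) ≤ a / (δ ^ 2 * ((1 - ε) * N * n * w)) := by gcongr
    _ = 1 / (δ ^ 2 * ((1 - ε) * N)) * (a / (n * w)) := by
      have : 1 - ε ≠ 0 := by linarith
      field_simp
    _ ≤ ε := h2.le

end prob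

lemma lp_bound {Ω : Type*} [MeasurableSpace Ω] {P : Measure Ω} [IsProbabilityMeasure P]
    {Y : Ω → ℝ} (hY : Measurable Y) (ε : ℝ) (hε : 0 < ε) (h : P.real {ω | ε ≤ |Y ω - 1|} ≤ ε) :
    levyProkhorovDist (P.map Y) (Measure.dirac (1 : ℝ)) ≤ ε := by
  have hE : P {ω | ε ≤ |Y ω - 1|} ≤ ENNReal.ofReal ε := by
    rw [measureReal_def] at h
    exact (ENNReal.le_ofReal_iff_toReal_le (measure_ne_top _ _) hε.le).2 h
  have key : levyProkhorovEDist (P.map Y) (Measure.dirac (1 : ℝ)) ≤ ENNReal.ofReal ε := by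
    refine sInf_le fun B hB => ?_
    rw [ENNReal.toReal_ofReal hε.le, Measure.map_apply hY hB,
      Measure.map_apply hY Metric.isOpen_thickening.measurableSet]
    constructor
    · by_cases h1 : (1 : ℝ) ∈ Metric.thickening ε B
      · rw [Measure.dirac_apply_of_mem h1]
        exact prob_le_one.trans le_self_add
      · refine le_trans (measure_mono fun ω hω => ?_) (hE.trans le_add_self)
        simp only [Set.mem_ofPred_eq]
        by_contra hc
        exact h1 (Metric.mem_thickening_iff.2 ⟨Y ω, hω, by
          rw [dist_comm, Real.dist_eq]; exact not_le.1 hc⟩)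
    · by_cases h1 : (1 : ℝ) ∈ B
      · rw [Measure.dirac_apply_of_mem h1, ← measure_univ (μ := P)]
        refine le_trans (measure_mono (t := Y ⁻¹' Metric.thickening ε B ∪ {ω | ε ≤ |Y ω - 1|}) ?_)
          ((measure_union_le _ _).trans (add_le_add le_rfl hE))
        intro ω _
        by_cases hc : ε ≤ |Y ω - 1|
        · exact Or.inr hc
        · exact Or.inl (Metric.mem_thickening_iff.2 ⟨1, h1, by
            rw [Real.dist_eq]; exact not_le.1 hc⟩)
      · rw [Measure.dirac_apply' _ hB]; simp [h1]
  exact ENNReal.toReal_le_of_le_ofReal hε.le key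

lemma lim_of_bound (f : ℕ → ℕ → ℝ) (h0 : ∀ N n, 0 ≤ f N n)
    (h : ∀ ε > 0, ∀ᶠ N in atTop, ∀ᶠ n in atTop, f N n ≤ ε) :
    Tendsto (fun N => limsup (f N) atTop) atTop (nhds 0) := by
  rw [Metric.tendsto_nhds]
  intro ε hε
  filter_upwards [h (ε / 2) (half_pos hε)] with N hN
  have h1 : limsup (f N) atTop ≤ ε / 2 := by
    refine limsup_le_of_le ?_ hN
    exact isCoboundedUnder_le_of_le atTop (x := 0) (h0 N)
  have h2 : 0 ≤ limsup (f N) atTop := by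
    refine le_limsup_of_frequently_le (Frequently.of_forall (h0 N)) ?_
    exact ⟨ε / 2, by simpa using hN⟩
  rw [Real.dist_eq, sub_zero, abs_of_nonneg h2]
  linarith

lemma rN_lim {Ω : Type*} [MeasurableSpace Ω] {P : Measure Ω} [IsProbabilityMeasure P]
    {X : Ω → ℝ} (hX : Measurable X) (h : RV P X) :
    Tendsto (fun y => y * tail P X (hinv P X y)) atTop (nhds 1) := by
  have ha := hinv_atTop hX h
  rw [tendsto_order]
  constructor
  · intro b hb
    obtain ⟨l, hl1, hl2⟩ := exists_between (max_lt hb one_pos)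
    have hl0 : 0 < l := (le_max_right _ _).trans_lt hl1
    have hbl : b < l := (le_max_left _ _).trans_lt hl1
    filter_upwards [((h l hl0).comp ha).eventually (lt_mem_nhds hbl), ha.eventually_gt_atTop 0,
      eventually_gt_atTop 0] with y h1 h2 hy
    refine h1.trans_le ?_
    have h3 := tail_of_lt (P := P) (X := X) (y := y) (mul_pos hl0 h2).le
      (show l * hinv P X y < hinv P X y by nlinarith)
    simp only [Function.comp]
    rw [div_le_iff₀ (h.pos _)]
    have h4 : 1 ≤ y * tail P X (l * hinv P X y) := by
      rw [inv_lt_iff_one_lt_mul₀ hy] at h3; linarith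
    nlinarith [h.pos (hinv P X y)]
  · intro b hb
    obtain ⟨l, hl1, hl2⟩ := exists_between hb
    have hl0 : 0 < l := by linarith
    filter_upwards [((h l hl0).comp ha).eventually (gt_mem_nhds hl2), ha.eventually_gt_atTop 0,
      eventually_gt_atTop 0] with y h1 h2 hy
    refine lt_of_le_of_lt ?_ h1
    have h3 := tail_of_gt (P := P) hX hy (show hinv P X y < l * hinv P X y by nlinarith)
    simp only [Function.comp]
    rw [le_div_iff₀ (h.pos _)]
    have h4 : y * tail P X (l * hinv P X y) ≤ 1 := by
      calc _ ≤ y * y⁻¹ := by gcongr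
        _ = 1 := mul_inv_cancel₀ hy.ne'
    nlinarith [h.pos (hinv P X y)]

/-- if `α = 1` and `E[X] = ∞`, then for `i ∈ {1, N}`,
`lim_{N→∞} limsup_{n→∞} d(L((log₂ N / c_N) X_i(n)/(n b^N_n)), δ₁) = 0` in the
Lévy–Prokhorov distance. -/
theorem stmt_16 {Ω : Type*} [MeasurableSpace Ω] (P : Measure Ω) [IsProbabilityMeasure P]
    (X : Ω → ℝ) (hXmeas : Measurable X) (hXpos : ∀ ω, 0 ≤ X ω)
    (hXnotint : ¬ Integrable X P)
    (hRV : ∀ l : ℝ, 0 < l →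
      Tendsto (fun x => tail P X x / tail P X (l * x)) atTop (nhds (l ^ (1 : ℝ))))
    (ξ : (N : ℕ) → ℕ → Fin N → Fin 2 → Ω → ℝ)
    (hξmeas : ∀ N n i j, Measurable (ξ N n i j))
    (hξpos : ∀ N n i j ω, 0 ≤ ξ N n i j ω)
    (hξdist : ∀ N n i j, Measure.map (ξ N n i j) P = Measure.map X P)
    (hξindep : ∀ N, iIndepFun
      (fun p : ℕ × Fin N × Fin 2 => ξ N p.1 p.2.1 p.2.2) P) :
    Tendsto (fun N : ℕ => Filter.limsup (fun n : ℕ =>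
        levyProkhorovDist
          (Measure.map (fun ω =>
            (Real.logb 2 N / cN P X N) *
              (brwMax N (fun k i j => ξ N k i j ω) n / (n * bN P X N n))) P)
          (Measure.dirac (1 : ℝ))) atTop)
      atTop (nhds 0) ∧
    Tendsto (fun N : ℕ => Filter.limsup (fun n : ℕ =>
        levyProkhorovDist
          (Measure.map (fun ω =>
            (Real.logb 2 N / cN P X N) *
              (brwMin N (fun k i j => ξ N k i j ω) n / (n * bN P X N n))) P)
          (Measure.dirac (1 : ℝ))) atTop)
      atTop (nhds 0) := by
  have hRV' : RV P X := fun l hl => by simpa using hRV l hl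
  have hm := mT_atTop hXmeas hXpos hXnotint
  have hNy : Tendsto (fun N : ℕ => 2 * (N : ℝ) * Real.logb 2 N) atTop atTop :=
    (tendsto_natCast_atTop_atTop.const_mul_atTop two_pos).atTop_mul_atTop₀
      ((Real.tendsto_logb_atTop one_lt_two).comp tendsto_natCast_atTop_atTop)
  have hr : Tendsto (fun N : ℕ => 2 * (N : ℝ) * Real.logb 2 N * tail P X (cN P X N))
      atTop (nhds 1) := (rN_lim hXmeas hRV').comp hNy
  have hcN : Tendsto (cN P X) atTop atTop := (hinv_atTop hXmeas hRV').comp hNy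
  have main : ∀ ε > 0, ∀ᶠ N : ℕ in atTop, ∀ᶠ n : ℕ in atTop, ∀ R : Ω → ℝ, Measurable R →
      (∀ ω, brwMin N (fun k i j => ξ N k i j ω) n ≤ R ω) →
      (∀ ω, R ω ≤ brwMax N (fun k i j => ξ N k i j ω) n) →
      levyProkhorovDist (Measure.map (fun ω =>
            (Real.logb 2 N / cN P X N) * (R ω / (n * bN P X N n))) P)
          (Measure.dirac (1 : ℝ)) ≤ ε := by
    intro ε hε
    obtain ⟨δ, hδ0, hδε, hδ1⟩ : ∃ δ : ℝ, 0 < δ ∧ 4 * δ ≤ ε ∧ δ < 1 :=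
      ⟨min (ε / 4) (1 / 2), by positivity, by linarith [min_le_left (ε / 4) (1 / 2)],
        by linarith [min_le_right (ε / 4) (1 / 2)]⟩
    filter_upwards [hr.eventually (lt_mem_nhds (show 1 - δ < 1 by linarith)),
      hr.eventually (gt_mem_nhds (show 1 < 1 + δ by linarith)), hcN.eventually_gt_atTop 0,
      eventually_ge_atTop 1] with N h1 h2 hc hN
    have ht : ∀ n i j, tail P (ξ N n i j) = tail P X := fun n i j =>
      tail_eq hXmeas (hξmeas N n i j) (hξdist N n i j)
    have e := (L3 hXmeas hRV' hm _ hc).eventually (lt_mem_nhds (show (0 : ℝ) < 1 by norm_num))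
    filter_upwards [up_bound hXmeas hRV' hm hN (ξ N) (hξmeas N) (hξpos N) ht (hξindep N) _ hc δ hδ0,
      low_bound hXmeas hRV' hm hN (ξ N) (hξmeas N) (hξpos N) ht (hξindep N) _ hc δ hδ0 hδ1,
      e, eventually_gt_atTop 0] with n hup hlow hD hn R hR hR1 hR2
    refine lp_bound ((hR.div_const _).const_mul _) ε hε ?_
    have hn' : (0 : ℝ) < n := by exact_mod_cast hn
    have hN' : (0 : ℝ) < N := by exact_mod_cast hN
    have hw0 := mT_nonneg (P := P) (X := X) (hinv_nonneg (P := P) (X := X) n)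
    have hD0 : 0 < mT P X (cN P X N * hinv P X n) - mT P X (cN P X N) := by
      by_contra hcon
      exact absurd hD (not_lt.2 (div_nonpos_of_nonpos_of_nonneg (not_lt.1 hcon) hw0))
    have htc := hRV'.pos (cN P X N)
    rw [bN_eq N n hc]
    set D := mT P X (cN P X N * hinv P X n) - mT P X (cN P X N)
    set r := 2 * (N : ℝ) * Real.logb 2 N * tail P X (cN P X N) with hrdef
    have hQ : 0 < 2 * N * n * D := by positivity
    have heq : ∀ ω, (Real.logb 2 N / cN P X N) *
        (R ω / (n * (D / (cN P X N * tail P X (cN P X N))))) = r * (R ω / (2 * N * n * D)) := by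
      intro ω
      rw [hrdef]
      field_simp
    simp only [heq]
    refine le_trans (measureReal_mono (s₂ := {ω | (1 + δ) * (2 * N * n * D) <
      ∑ t ∈ Finset.range n, ∑ p : Fin N × Fin 2, ξ N t p.1 p.2 ω} ∪
      {ω | brwMin N (fun n i j => ξ N n i j ω) n < (1 - δ) * (2 * N * n * D)}) ?_) ?_
    · intro ω hω
      by_contra hcon
      rw [Set.mem_union, not_or] at hcon
      obtain ⟨hu, hl⟩ := hcon
      simp only [Set.mem_ofPred_eq, not_lt] at hu hl hω
      have hu' := (hR2 ω).trans ((brw_upper' hN (fun n i j => hξpos N n i j ω) n).trans hu)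
      have hl' := hl.trans (hR1 ω)
      rw [← div_le_iff₀ hQ] at hu'
      rw [← le_div_iff₀ hQ] at hl'
      set u := R ω / (2 * N * n * D)
      have h3 : r * u ≤ (1 + δ) * (1 + δ) :=
        mul_le_mul h2.le hu' (by linarith) (by linarith)
      have h4 : (1 - δ) * (1 - δ) ≤ r * u :=
        mul_le_mul h1.le hl' (by linarith) (by linarith)
      have : |r * u - 1| < ε := by rw [abs_lt]; constructor <;> nlinarith
      linarith
    · refine (measureReal_union_le _ _).trans ?_
      linarith
  have hbm : ∀ N n i, Measurable fun ω => brw N (fun _ => 0) (fun k i j => ξ N k i j ω) n i :=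
    fun N n i => brw_meas N _ (hξmeas N) n i
  constructor
  · refine lim_of_bound _ (fun _ _ => ENNReal.toReal_nonneg) fun ε hε => ?_
    filter_upwards [main ε hε, eventually_ge_atTop 1] with N hN hN1
    filter_upwards [hN] with n hn
    exact hn _ (Measurable.iSup fun i => hbm N n i) (fun ω => brwMin_le_brwMax hN1 n)
      (fun ω => le_rfl)
  · refine lim_of_bound _ (fun _ _ => ENNReal.toReal_nonneg) fun ε hε => ?_
    filter_upwards [main ε hε, eventually_ge_atTop 1] with N hN hN1
    filter_upwards [hN] with n hn
    exact hn _ (Measurable.iInf fun i => hbm N n i) (fun ω => le_rfl)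
      (fun ω => brwMin_le_brwMax hN1 n)

end
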